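/- arXiv:2312.10642 — 2 statements merged into one kernel-verified Lean document; each statement's English description precedes it below -/
import Mathlib

section
/- Theorem 1 (telescoping identity for the Diaster proxy reward, in expectation): Assume ρ_i^π(s) > 0 for every state s ∈ S and every 0 ≤ i ≤ T. Then for every subsequence length h with 2 ≤ h ≤ T and every time step t with 0 ≤ t ≤ T − h, Σ_{i=t}^{t+h−1} Σ_{s∈S} Σ_{a∈A} ρ_i^π(s) π(a|s) r̂_i^π(s,a) = Σ_{τ_{0:t+h}} 𝒯_{t+h}^π(τ_{0:t+h}) R_sub(τ_{0:t+h}) − Σ_{τ_{0:t}} 𝒯_t^π(τ_{0:t}) R_sub(τ_{0:t}); that is, under the on-policy distribution, the expected sum of the step-wise proxy rewards over any consecutive h steps equals the expected difference of the two sub-trajectory rewards that differ by h steps. -/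
open Finset

/-- Trajectory distribution 𝒯_t^π. -/
noncomputable def Ttraj {S A : Type*} (ρ0 : S → ℝ) (P : S → A → S → ℝ)
    (pol : S → A → ℝ) : (t : ℕ) → (Fin t → S × A) → ℝ
  | 0, _ => 1
  | t + 1, τ =>
      ρ0 (τ 0).1 * pol (τ 0).1 (τ 0).2 *
        ∏ i : Fin t,
          (P (τ i.castSucc).1 (τ i.castSucc).2 (τ i.succ).1 *
            pol (τ i.succ).1 (τ i.succ).2)

/-- On-policy state distribution ρ_t^π. -/
noncomputable def rhoPi {S A : Type*} [Fintype S] [Fintype A] (ρ0 : S → ℝ)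
    (P : S → A → S → ℝ) (pol : S → A → ℝ) : ℕ → S → ℝ
  | 0 => ρ0
  | t + 1 => fun s =>
      ∑ τ : Fin (t + 1) → S × A,
        Ttraj ρ0 P pol (t + 1) τ * P (τ (Fin.last t)).1 (τ (Fin.last t)).2 s

/-- Conditioned sub-trajectory distribution Γ_t^π(τ|s). -/
noncomputable def GammaPi {S A : Type*} [Fintype S] [Fintype A] (ρ0 : S → ℝ)
    (P : S → A → S → ℝ) (pol : S → A → ℝ) :
    (t : ℕ) → (Fin t → S × A) → S → ℝ
  | 0, _, _ => 1
  | t + 1, τ, s =>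
      Ttraj ρ0 P pol (t + 1) τ * P (τ (Fin.last t)).1 (τ (Fin.last t)).2 s /
        rhoPi ρ0 P pol (t + 1) s

/-- Step-wise proxy reward r̂_t^π(s,a). -/
noncomputable def rhat {S A : Type*} [Fintype S] [Fintype A] (ρ0 : S → ℝ)
    (P : S → A → S → ℝ) (pol : S → A → ℝ)
    (Rsub : (t : ℕ) → (Fin t → S × A) → ℝ) (t : ℕ) (s : S) (a : A) : ℝ :=
  ∑ τ : Fin t → S × A,
    GammaPi ρ0 P pol t τ s * (Rsub (t + 1) (Fin.snoc τ (s, a)) - Rsub t τ)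

/-- h-step transition kernel μ_h^π (junk value 0 at h = 0). -/
noncomputable def muStep {S A : Type*} [Fintype S] [Fintype A]
    (P : S → A → S → ℝ) (pol : S → A → ℝ) : ℕ → S → A → S → ℝ
  | 0, _, _, _ => 0
  | 1, s, a, s' => P s a s'
  | h + 2, s, a, s'' =>
      ∑ s', ∑ a', muStep P pol (h + 1) s a s' * pol s' a' * P s' a' s''

/-- Joint weight of a sub-trajectory and the next state. -/
noncomputable def Wnext {S A : Type*} (ρ0 : S → ℝ) (P : S → A → S → ℝ)
    (pol : S → A → ℝ) : (t : ℕ) → (Fin t → S × A) → S → ℝ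
  | 0, _, s => ρ0 s
  | t + 1, τ, s => Ttraj ρ0 P pol (t + 1) τ * P (τ (Fin.last t)).1 (τ (Fin.last t)).2 s

theorem Ttraj_snoc {S A : Type*} (ρ0 : S → ℝ) (P : S → A → S → ℝ)
    (pol : S → A → ℝ) (t : ℕ) (τ : Fin t → S × A) (x : S × A) :
    Ttraj ρ0 P pol (t + 1) (Fin.snoc τ x : Fin (t + 1) → S × A)
      = Wnext ρ0 P pol t τ x.1 * pol x.1 x.2 := by
  cases t with
  | zero =>
    have : (Fin.snoc τ x : Fin 1 → S × A) 0 = x := by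
      exact Fin.snoc_last (α := fun _ => S × A) x τ
    simp [Ttraj, Wnext, this]
  | succ t =>
    have h0 : (Fin.snoc τ x : Fin (t + 2) → S × A) 0 = τ 0 := by
      exact Fin.snoc_castSucc (α := fun _ => S × A) x τ 0
    have hc : ∀ i : Fin (t + 1), (Fin.snoc τ x : Fin (t + 2) → S × A) i.castSucc = τ i :=
      fun i => Fin.snoc_castSucc (α := fun _ => S × A) x τ i
    have hl : (Fin.snoc τ x : Fin (t + 2) → S × A) (Fin.last (t + 1)) = x :=
      Fin.snoc_last (α := fun _ => S × A) x τ
    simp only [Ttraj, Wnext]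
    rw [Fin.prod_univ_castSucc]
    simp only [Fin.succ_castSucc, Fin.succ_last, hc, hl, h0]
    ring

theorem Wnext_sum {S A : Type*} [Fintype S] [Fintype A] (ρ0 : S → ℝ) (hρ0sum : ∑ s, ρ0 s = 1)
    (P : S → A → S → ℝ) (hPsum : ∀ s a, ∑ s', P s a s' = 1)
    (pol : S → A → ℝ) (t : ℕ) (τ : Fin t → S × A) :
    ∑ s, Wnext ρ0 P pol t τ s = Ttraj ρ0 P pol t τ := by
  cases t with
  | zero => simpa [Wnext, Ttraj] using hρ0sum
  | succ t => simp only [Wnext]; rw [← Finset.mul_sum, hPsum, mul_one]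

theorem sum_snoc {X : Type*} [Fintype X] (t : ℕ) (f : (Fin (t + 1) → X) → ℝ) :
    ∑ τ, f τ = ∑ x : X, ∑ τ : Fin t → X, f (Fin.snoc τ x) := by
  rw [← Fintype.sum_prod_type']
  exact (Equiv.sum_comp (Fin.snocEquiv (fun _ : Fin (t + 1) => X)) f).symm

theorem rho_mul_Gamma {S A : Type*} [Fintype S] [Fintype A] (ρ0 : S → ℝ)
    (P : S → A → S → ℝ) (pol : S → A → ℝ) (t : ℕ) (τ : Fin t → S × A) (s : S)
    (hpos : 0 < rhoPi ρ0 P pol t s) :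
    rhoPi ρ0 P pol t s * GammaPi ρ0 P pol t τ s = Wnext ρ0 P pol t τ s := by
  cases t with
  | zero => simp [rhoPi, GammaPi, Wnext]
  | succ t =>
    simp only [GammaPi, Wnext]
    exact mul_div_cancel₀ _ hpos.ne'

theorem one_step {S A : Type*} [Fintype S] [Fintype A]
    (ρ0 : S → ℝ) (hρ0sum : ∑ s, ρ0 s = 1)
    (P : S → A → S → ℝ) (hPsum : ∀ s a, ∑ s', P s a s' = 1)
    (pol : S → A → ℝ) (hpolsum : ∀ s, ∑ a, pol s a = 1)
    (Rsub : (t : ℕ) → (Fin t → S × A) → ℝ) (i : ℕ)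
    (hpos : ∀ s, 0 < rhoPi ρ0 P pol i s) :
    ∑ s, ∑ a, rhoPi ρ0 P pol i s * pol s a * rhat ρ0 P pol Rsub i s a
      = (∑ τ : Fin (i + 1) → S × A, Ttraj ρ0 P pol (i + 1) τ * Rsub (i + 1) τ)
        - ∑ τ : Fin i → S × A, Ttraj ρ0 P pol i τ * Rsub i τ := by
  have e : ∀ s a, rhoPi ρ0 P pol i s * pol s a * rhat ρ0 P pol Rsub i s a
      = (∑ τ : Fin i → S × A, Ttraj ρ0 P pol (i + 1) (Fin.snoc τ (s, a) : Fin (i + 1) → S × A)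
            * Rsub (i + 1) (Fin.snoc τ (s, a)))
        - ∑ τ : Fin i → S × A, pol s a * (Wnext ρ0 P pol i τ s * Rsub i τ) := by
    intro s a
    rw [rhat, Finset.mul_sum, ← Finset.sum_sub_distrib]
    refine Finset.sum_congr rfl fun τ _ => ?_
    rw [Ttraj_snoc, ← rho_mul_Gamma ρ0 P pol i τ s (hpos s)]
    ring
  simp only [e, Finset.sum_sub_distrib]
  congr 1
  · rw [sum_snoc, Fintype.sum_prod_type]
  · have : ∀ s, ∑ a, ∑ τ : Fin i → S × A, pol s a * (Wnext ρ0 P pol i τ s * Rsub i τ)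
        = ∑ τ : Fin i → S × A, Wnext ρ0 P pol i τ s * Rsub i τ := by
      intro s
      rw [Finset.sum_comm]
      refine Finset.sum_congr rfl fun τ _ => ?_
      rw [← Finset.sum_mul, hpolsum, one_mul]
    simp only [this]
    rw [Finset.sum_comm]
    refine Finset.sum_congr rfl fun τ _ => ?_
    rw [← Finset.sum_mul, Wnext_sum ρ0 hρ0sum P hPsum]

/-- Theorem 1 of Diaster: telescoping identity for the proxy reward in expectation. -/
theorem diaster_theorem1 {S A : Type*} [Fintype S] [Fintype A] [Nonempty S] [Nonempty A]
    (T : ℕ) (hT : 1 ≤ T)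
    (ρ0 : S → ℝ) (hρ0nn : ∀ s, 0 ≤ ρ0 s) (hρ0sum : ∑ s, ρ0 s = 1)
    (P : S → A → S → ℝ) (hPnn : ∀ s a s', 0 ≤ P s a s')
    (hPsum : ∀ s a, ∑ s', P s a s' = 1)
    (pol : S → A → ℝ) (hpolnn : ∀ s a, 0 ≤ pol s a)
    (hpolsum : ∀ s, ∑ a, pol s a = 1)
    (Rsub : (t : ℕ) → (Fin t → S × A) → ℝ)
    (hRsub0 : ∀ τ : Fin 0 → S × A, Rsub 0 τ = 0)
    (hρpos : ∀ i ≤ T, ∀ s, 0 < rhoPi ρ0 P pol i s)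
    (h t : ℕ) (hh : 2 ≤ h) (hhT : h ≤ T) (hth : t + h ≤ T) :
    ∑ i ∈ Finset.Ico t (t + h), ∑ s, ∑ a,
        rhoPi ρ0 P pol i s * pol s a * rhat ρ0 P pol Rsub i s a
      = (∑ τ : Fin (t + h) → S × A, Ttraj ρ0 P pol (t + h) τ * Rsub (t + h) τ)
        - ∑ τ : Fin t → S × A, Ttraj ρ0 P pol t τ * Rsub t τ := by
  have key : ∀ i ∈ Finset.Ico t (t + h), ∑ s, ∑ a,
        rhoPi ρ0 P pol i s * pol s a * rhat ρ0 P pol Rsub i s a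
      = (fun n => ∑ τ : Fin n → S × A, Ttraj ρ0 P pol n τ * Rsub n τ) (i + 1)
        - (fun n => ∑ τ : Fin n → S × A, Ttraj ρ0 P pol n τ * Rsub n τ) i := by
    intro i hi
    have hi' := Finset.mem_Ico.mp hi
    exact one_step ρ0 hρ0sum P hPsum pol hpolsum Rsub i (hρpos i (by omega))
  rw [Finset.sum_congr rfl key]
  exact Finset.sum_Ico_sub (fun n => ∑ τ : Fin n → S × A, Ttraj ρ0 P pol n τ * Rsub n τ)
    (Nat.le_add_right t h)
end

section
/- Single-step expectation identity for the proxy reward: for every 0 ≤ i ≤ T − 1, assuming ρ_i^π(s) > 0 for every state s ∈ S, the expected one-step proxy reward equals the expected increment of the sub-trajectory reward: Σ_{s∈S} Σ_{a∈A} ρ_i^π(s) π(a|s) r̂_i^π(s,a) = Σ_{τ_{0:i+1}} 𝒯_{i+1}^π(τ_{0:i+1}) R_sub(τ_{0:i+1}) − Σ_{τ_{0:i}} 𝒯_i^π(τ_{0:i}) R_sub(τ_{0:i}). -/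
open Finset

theorem dss_snoc {S A : Type*} [Fintype S] [Fintype A]
    (ρ0 : S → ℝ) (P : S → A → S → ℝ) (pol : S → A → ℝ) (i : ℕ)
    (hρpos : ∀ s, 0 < rhoPi ρ0 P pol i s) (τ : Fin i → S × A) (s : S) (a : A) :
    rhoPi ρ0 P pol i s * pol s a * GammaPi ρ0 P pol i τ s
      = Ttraj ρ0 P pol (i + 1) (Fin.snoc τ (s, a) : Fin (i + 1) → S × A) := by
  cases i with
  | zero =>
    have h : (Fin.snoc τ (s, a) : Fin 1 → S × A) 0 = (s, a) :=
      Fin.snoc_last (α := fun _ => S × A) (s, a) τ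
    simp [rhoPi, GammaPi, Ttraj, h]
  | succ t =>
    have hne := (hρpos s).ne'
    have h0 : (Fin.snoc τ (s, a) : Fin (t + 1 + 1) → S × A) 0 = τ 0 :=
      Fin.snoc_castSucc (α := fun _ => S × A) (s, a) τ 0
    have hc : ∀ j : Fin (t + 1),
        (Fin.snoc τ (s, a) : Fin (t + 1 + 1) → S × A) j.castSucc = τ j :=
      fun j => Fin.snoc_castSucc (α := fun _ => S × A) (s, a) τ j
    have hl : (Fin.snoc τ (s, a) : Fin (t + 1 + 1) → S × A) (Fin.last (t + 1)) = (s, a) :=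
      Fin.snoc_last (α := fun _ => S × A) (s, a) τ
    have hG : rhoPi ρ0 P pol (t + 1) s * pol s a * GammaPi ρ0 P pol (t + 1) τ s
        = Ttraj ρ0 P pol (t + 1) τ * P (τ (Fin.last t)).1 (τ (Fin.last t)).2 s * pol s a := by
      rw [GammaPi]
      field_simp
    rw [hG]
    simp only [Ttraj]
    rw [Fin.prod_univ_castSucc (n := t)]
    simp only [h0, hc, Fin.succ_castSucc, Fin.succ_last, hl]
    ring

theorem dss_marg {S A : Type*} [Fintype S] [Fintype A]
    (ρ0 : S → ℝ) (hρ0sum : ∑ s, ρ0 s = 1)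
    (P : S → A → S → ℝ) (hPsum : ∀ s a, ∑ s', P s a s' = 1)
    (pol : S → A → ℝ) (hpolsum : ∀ s, ∑ a, pol s a = 1) (i : ℕ)
    (hρpos : ∀ s, 0 < rhoPi ρ0 P pol i s) (τ : Fin i → S × A) :
    ∑ s, ∑ a, Ttraj ρ0 P pol (i + 1) (Fin.snoc τ (s, a) : Fin (i + 1) → S × A)
      = Ttraj ρ0 P pol i τ := by
  have h1 : ∀ s, ∑ a, Ttraj ρ0 P pol (i + 1) (Fin.snoc τ (s, a) : Fin (i + 1) → S × A)
      = rhoPi ρ0 P pol i s * GammaPi ρ0 P pol i τ s := by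
    intro s
    simp only [← dss_snoc ρ0 P pol i hρpos]
    rw [← Finset.sum_mul, ← Finset.mul_sum, hpolsum, mul_one]
  simp only [h1]
  cases i with
  | zero => simp [rhoPi, GammaPi, Ttraj, hρ0sum]
  | succ t =>
    have h2 : ∀ s, rhoPi ρ0 P pol (t + 1) s * GammaPi ρ0 P pol (t + 1) τ s
        = Ttraj ρ0 P pol (t + 1) τ * P (τ (Fin.last t)).1 (τ (Fin.last t)).2 s := by
      intro s
      have hne := (hρpos s).ne'
      rw [GammaPi]
      field_simp
    simp only [h2]
    rw [← Finset.mul_sum, hPsum, mul_one]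

/-- Single-step expectation identity for the proxy reward: the expected one-step proxy
reward equals the expected increment of the sub-trajectory reward. -/
theorem diaster_single_step_identity {S A : Type*} [Fintype S] [Fintype A]
    [Nonempty S] [Nonempty A]
    (T : ℕ) (hT : 1 ≤ T)
    (ρ0 : S → ℝ) (hρ0nn : ∀ s, 0 ≤ ρ0 s) (hρ0sum : ∑ s, ρ0 s = 1)
    (P : S → A → S → ℝ) (hPnn : ∀ s a s', 0 ≤ P s a s')
    (hPsum : ∀ s a, ∑ s', P s a s' = 1)
    (pol : S → A → ℝ) (hpolnn : ∀ s a, 0 ≤ pol s a)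
    (hpolsum : ∀ s, ∑ a, pol s a = 1)
    (Rsub : (t : ℕ) → (Fin t → S × A) → ℝ)
    (hRsub0 : ∀ τ : Fin 0 → S × A, Rsub 0 τ = 0)
    (i : ℕ) (hi : i + 1 ≤ T)
    (hρpos : ∀ s, 0 < rhoPi ρ0 P pol i s) :
    ∑ s, ∑ a, rhoPi ρ0 P pol i s * pol s a * rhat ρ0 P pol Rsub i s a
      = (∑ τ : Fin (i + 1) → S × A, Ttraj ρ0 P pol (i + 1) τ * Rsub (i + 1) τ)
        - ∑ τ : Fin i → S × A, Ttraj ρ0 P pol i τ * Rsub i τ := by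
  have hsplit : ∑ τ : Fin (i + 1) → S × A, Ttraj ρ0 P pol (i + 1) τ * Rsub (i + 1) τ
      = ∑ s, ∑ a, ∑ τ : Fin i → S × A,
        Ttraj ρ0 P pol (i + 1) (Fin.snoc τ (s, a) : Fin (i + 1) → S × A)
          * Rsub (i + 1) (Fin.snoc τ (s, a)) := by
    rw [← (Fin.snocEquiv (fun _ : Fin (i + 1) => S × A)).sum_comp, Fintype.sum_prod_type,
      Fintype.sum_prod_type]
    rfl
  have hmarg : ∑ τ : Fin i → S × A, Ttraj ρ0 P pol i τ * Rsub i τ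
      = ∑ s, ∑ a, ∑ τ : Fin i → S × A,
        Ttraj ρ0 P pol (i + 1) (Fin.snoc τ (s, a) : Fin (i + 1) → S × A) * Rsub i τ := by
    simp only [← dss_marg ρ0 hρ0sum P hPsum pol hpolsum i hρpos, Finset.sum_mul]
    rw [Finset.sum_comm]
    refine Finset.sum_congr rfl fun s _ => ?_
    rw [Finset.sum_comm]
  rw [hsplit, hmarg]
  simp only [← Finset.sum_sub_distrib]
  refine Finset.sum_congr rfl fun s _ => Finset.sum_congr rfl fun a _ => ?_
  rw [rhat, Finset.mul_sum]
  refine Finset.sum_congr rfl fun τ _ => ?_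
  rw [← dss_snoc ρ0 P pol i hρpos]
  ring
end
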